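/- arXiv:math/9610219 — 2 statements merged into one kernel-verified Lean document; each statement's English description precedes it below -/
import Mathlib

section
/- Let I be a translation-invariant σ-ideal on ℝ (i.e., I is closed under subsets and countable unions, and A ∈ I, x ∈ ℝ imply A + x ∈ I). If there exists a Borel measurable function f : ℝ → ℝ such that f⁻¹[{x}] ∉ I for every x ∈ ℝ, then there exists a Borel measurable function f* : ℝ → ℝ such that (f*)⁻¹[{x}] ∩ U ∉ I for every x ∈ ℝ and every nonempty open set U ⊆ ℝ. -/
open Set MeasureTheory

/-!
Call a Borel set `D` *big* if some Borel function has all its fibers positive (outside `I`) on `D`.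
The argument rests on one diagonalization, `Big.exists_inter`: if a big set is covered by countably
many Borel sets `E n`, then some `D ∩ E n` is big. Indeed, code the values of the witness `g` as
sequences of reals. If no `D ∩ E n` were big, then for each `n` some fiber of the `n`-th
coordinate of `g` would be null on `D ∩ E n`, over `t n` say; then the fiber of `g` over the
sequence `t` would be null on `D`.

* Covering `ℝ` by balls of a fixed radius and translating, every nonempty open set is big.
* A big set contains a disjoint family of big sets indexed by `ℝ` (code values as pairs and
  fix the first coordinate). If the sets `W c` are disjoint and `D` is big, then
  `D = (D \ W c) ∪ (D \ W c')` for `c ≠ c'`, so `D \ W c` is big for all but at most one `c`. Hence,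
  given big sets `D 0, D 1, …`, there is a big `P ⊆ D 0` such that all the `D k \ P` are big.
* Iterating, a countable base `U n` of nonempty open sets admits disjoint big sets
  `P n ⊆ U n`, and gluing the functions that witness their bigness yields the required function.
-/

/-- A Borel set `D` on which some Borel function has all its fibers outside `I`. -/
def Big (I : Set (Set ℝ)) (D : Set ℝ) : Prop :=
  MeasurableSet D ∧ ∃ g : ℝ → ℝ, Measurable g ∧ ∀ x : ℝ, D ∩ g ⁻¹' {x} ∉ I

lemma Big.mono {I : Set (Set ℝ)} (hsub : ∀ A B : Set ℝ, A ⊆ B → B ∈ I → A ∈ I)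
    {D E : Set ℝ} (hD : Big I D) (hE : MeasurableSet E) (h : D ⊆ E) : Big I E := by
  obtain ⟨-, g, hg, hfib⟩ := hD
  exact ⟨hE, g, hg, fun x hx => hfib x (hsub _ _ (inter_subset_inter_left _ h) hx)⟩

lemma Big.exists_inter {I : Set (Set ℝ)} (hsub : ∀ A B : Set ℝ, A ⊆ B → B ∈ I → A ∈ I)
    (hcnt : ∀ f : ℕ → Set ℝ, (∀ n, f n ∈ I) → (⋃ n, f n) ∈ I)
    {D : Set ℝ} (hD : Big I D) (E : ℕ → Set ℝ) (hE : ∀ n, MeasurableSet (E n))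
    (hcov : D ⊆ ⋃ n, E n) : ∃ n, Big I (D ∩ E n) := by
  obtain ⟨hDm, g, hg, hfib⟩ := hD
  have hunc : Uncountable (ℕ → ℝ) :=
    (Function.const_injective (α := ℕ) (β := ℝ)).uncountable
  have e : ℝ ≃ᵐ (ℕ → ℝ) :=
    PolishSpace.measurableEquivOfNotCountable (not_countable_iff.2 inferInstance)
      (not_countable_iff.2 hunc)
  by_contra! hno
  have key : ∀ n, ∃ t : ℝ, (D ∩ E n) ∩ (fun y => e (g y) n) ⁻¹' {t} ∈ I := by
    intro n
    by_contra! h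
    exact hno n ⟨hDm.inter (hE n), _,
      (measurable_pi_apply n).comp (e.measurable.comp hg), h⟩
  choose t ht using key
  refine hfib (e.symm t) (hsub _ _ ?_ (hcnt _ ht))
  rintro y ⟨hyD, hy⟩
  obtain ⟨n, hn⟩ := mem_iUnion.1 (hcov hyD)
  refine mem_iUnion.2 ⟨n, ⟨hyD, hn⟩, ?_⟩
  have hy' : g y = e.symm t := hy
  simp [hy']

lemma Big.exists_disjoint_family {I : Set (Set ℝ)} {D : Set ℝ} (hD : Big I D) :
    ∃ W : ℝ → Set ℝ, (∀ c, Big I (W c)) ∧ (∀ c, W c ⊆ D) ∧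
      ∀ c c', c ≠ c' → Disjoint (W c) (W c') := by
  obtain ⟨hDm, g, hg, hfib⟩ := hD
  have e : ℝ ≃ᵐ ℝ × ℝ :=
    PolishSpace.measurableEquivOfNotCountable (not_countable_iff.2 inferInstance)
      (not_countable_iff.2 inferInstance)
  have heg : Measurable fun y => e (g y) := e.measurable.comp hg
  refine ⟨fun c => D ∩ (fun y => (e (g y)).1) ⁻¹' {c}, fun c => ⟨?_, fun y => (e (g y)).2,
    heg.snd, fun x => ?_⟩, fun c => inter_subset_left, fun c c' hc => ?_⟩
  · exact hDm.inter (heg.fst (measurableSet_singleton c))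
  · convert hfib (e.symm (c, x)) using 2
    ext y
    simp only [mem_inter_iff, mem_preimage, mem_singleton_iff, and_assoc]
    have hxy : g y = e.symm (c, x) ↔ e (g y) = (c, x) := e.toEquiv.eq_symm_apply
    rw [hxy, Prod.ext_iff]
  · rw [Set.disjoint_left]
    rintro y ⟨-, hy⟩ ⟨-, hy'⟩
    exact hc (hy.symm.trans hy')

lemma Big.diff_or_diff {I : Set (Set ℝ)} (hsub : ∀ A B : Set ℝ, A ⊆ B → B ∈ I → A ∈ I)
    (hcnt : ∀ f : ℕ → Set ℝ, (∀ n, f n ∈ I) → (⋃ n, f n) ∈ I)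
    {D V W : Set ℝ} (hD : Big I D) (hV : MeasurableSet V) (hW : MeasurableSet W)
    (hVW : Disjoint V W) : Big I (D \ V) ∨ Big I (D \ W) := by
  obtain ⟨n, hn⟩ := hD.exists_inter hsub hcnt (fun n => if n = 0 then Vᶜ else Wᶜ)
    (fun n => by split_ifs <;> [exact hV.compl; exact hW.compl]) (fun y _ => by
      by_cases hy : y ∈ V
      · exact mem_iUnion.2 ⟨1, by simpa using Set.disjoint_left.1 hVW hy⟩
      · exact mem_iUnion.2 ⟨0, by simpa using hy⟩)
  by_cases h0 : n = 0
  · left; simpa [h0, sdiff_eq] using hn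
  · right; simpa [h0, sdiff_eq] using hn

lemma Big.exists_split {I : Set (Set ℝ)} (hsub : ∀ A B : Set ℝ, A ⊆ B → B ∈ I → A ∈ I)
    (hcnt : ∀ f : ℕ → Set ℝ, (∀ n, f n ∈ I) → (⋃ n, f n) ∈ I)
    (D : ℕ → Set ℝ) (hD : ∀ n, Big I (D n)) :
    ∃ P, Big I P ∧ P ⊆ D 0 ∧ ∀ n, Big I (D n \ P) := by
  obtain ⟨W, hWb, hWD, hWd⟩ := (hD 0).exists_disjoint_family
  have hbad : (⋃ n, {c | ¬ Big I (D n \ W c)}).Countable := by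
    refine countable_iUnion fun n => Set.Subsingleton.countable fun c hc c' hc' => ?_
    by_contra hne
    exact ((hD n).diff_or_diff hsub hcnt (hWb c).1 (hWb c').1 (hWd c c' hne)).elim hc hc'
  obtain ⟨c, hc⟩ : ∃ c, c ∉ ⋃ n, {c | ¬ Big I (D n \ W c)} := by
    by_contra! h
    exact not_countable_univ (α := ℝ) (hbad.mono fun c _ => h c)
  simp only [mem_iUnion, mem_ofPred_eq, not_exists, not_not] at hc
  exact ⟨W c, hWb c, hWD c, hc⟩

lemma exists_disjoint_big {I : Set (Set ℝ)} (hsub : ∀ A B : Set ℝ, A ⊆ B → B ∈ I → A ∈ I)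
    (hcnt : ∀ f : ℕ → Set ℝ, (∀ n, f n ∈ I) → (⋃ n, f n) ∈ I)
    (U : ℕ → Set ℝ) (hU : ∀ n, Big I (U n)) :
    ∃ P : ℕ → Set ℝ, (∀ n, Big I (P n)) ∧ (∀ n, P n ⊆ U n) ∧
      ∀ m n, m < n → Disjoint (P m) (P n) := by
  -- A state is the sequence of big sets still to be treated; a step shifts it by one.
  choose Q hQb hQD hQ using fun s : {D : ℕ → Set ℝ // ∀ n, Big I (D n)} =>
    Big.exists_split hsub hcnt s.1 s.2
  let s : ℕ → {D : ℕ → Set ℝ // ∀ n, Big I (D n)} := fun n =>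
    Nat.rec ⟨U, hU⟩ (fun _ s => ⟨fun k => s.1 (k + 1) \ Q s, fun k => hQ s (k + 1)⟩) n
  have hs : ∀ n k, (s (n + 1)).1 k = (s n).1 (k + 1) \ Q (s n) := fun n k => rfl
  have hanti : ∀ j n k, (s (n + j)).1 k ⊆ (s n).1 (k + j) := by
    intro j
    induction j with
    | zero => intro n k; exact subset_rfl
    | succ j ih =>
      intro n k
      rw [← add_assoc, hs]
      refine sdiff_subset.trans ((ih n (k + 1)).trans ?_)
      rw [add_right_comm, add_assoc]
  refine ⟨fun n => Q (s n), fun n => hQb _, fun n => (hQD _).trans ?_, fun m n hmn => ?_⟩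
  · have := hanti n 0 0
    rwa [zero_add] at this
  · obtain ⟨j, rfl⟩ := Nat.exists_eq_add_of_lt hmn
    have h1 : Q (s (m + j + 1)) ⊆ (s (m + 1)).1 (0 + j) := by
      have := hanti j (m + 1) 0
      rw [add_right_comm] at this
      exact (hQD _).trans this
    rw [hs] at h1
    exact Set.disjoint_left.2 fun y hy hy' => (h1 hy').2 hy

lemma Big.translate {I : Set (Set ℝ)} (hinv : ∀ A ∈ I, ∀ x : ℝ, (fun a => a + x) '' A ∈ I)
    {D : Set ℝ} (hD : Big I D) (r : ℝ) : Big I ((fun y => y + r) ⁻¹' D) := by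
  obtain ⟨hDm, g, hg, hfib⟩ := hD
  have hr : Measurable fun y : ℝ => y + r := measurable_id.add_const r
  refine ⟨hr hDm, fun y => g (y + r), hg.comp hr, fun x hx => hfib x ?_⟩
  have := hinv _ hx r
  convert this using 1
  ext y
  constructor
  · rintro ⟨h1, h2⟩
    exact ⟨y - r, ⟨by simpa using h1, by simpa using h2⟩, by simp⟩
  · rintro ⟨z, ⟨h1, h2⟩, rfl⟩
    exact ⟨h1, h2⟩

lemma Big.of_isOpen {I : Set (Set ℝ)} (hsub : ∀ A B : Set ℝ, A ⊆ B → B ∈ I → A ∈ I)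
    (hcnt : ∀ f : ℕ → Set ℝ, (∀ n, f n ∈ I) → (⋃ n, f n) ∈ I)
    (hinv : ∀ A ∈ I, ∀ x : ℝ, (fun a => a + x) '' A ∈ I)
    (h : Big I univ) {U : Set ℝ} (hU : IsOpen U) (hne : U.Nonempty) : Big I U := by
  obtain ⟨x, hx⟩ := hne
  obtain ⟨ε, hε, hball⟩ := Metric.isOpen_iff.1 hU x hx
  obtain ⟨n, hn⟩ := h.exists_inter hsub hcnt
    (fun n => Metric.ball (TopologicalSpace.denseSeq ℝ n) ε)
    (fun n => measurableSet_ball) (fun y _ => by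
      obtain ⟨n, hn⟩ := (TopologicalSpace.denseRange_denseSeq ℝ).exists_dist_lt y hε
      exact mem_iUnion.2 ⟨n, hn⟩)
  rw [univ_inter] at hn
  refine (hn.translate hinv (TopologicalSpace.denseSeq ℝ n - x)).mono hsub hU.measurableSet ?_
  intro y hy
  apply hball
  simp only [mem_preimage, Metric.mem_ball, Real.dist_eq] at hy ⊢
  convert hy using 2
  ring

/-- If a translation-invariant σ-ideal `I` on `ℝ` has property (M) — there is a Borel
function `f : ℝ → ℝ` with all fibers outside `I` — then it has property (M*): there is
a Borel function `f* : ℝ → ℝ` such that `(f*)⁻¹[{x}] ∩ U ∉ I` for every `x ∈ ℝ` and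
every nonempty open `U ⊆ ℝ`. -/
theorem stmt13 (I : Set (Set ℝ))
    (hsub : ∀ A B : Set ℝ, A ⊆ B → B ∈ I → A ∈ I)
    (hcnt : ∀ f : ℕ → Set ℝ, (∀ n, f n ∈ I) → (⋃ n, f n) ∈ I)
    (hinv : ∀ A ∈ I, ∀ x : ℝ, (fun a => a + x) '' A ∈ I)
    (f : ℝ → ℝ) (hf : Measurable f) (hfib : ∀ x : ℝ, f ⁻¹' {x} ∉ I) :
    ∃ g : ℝ → ℝ, Measurable g ∧
      ∀ (x : ℝ) (U : Set ℝ), IsOpen U → U.Nonempty → g ⁻¹' {x} ∩ U ∉ I := by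
  have huniv : Big I univ := ⟨MeasurableSet.univ, f, hf, fun x => by simpa using hfib x⟩
  obtain ⟨b, hbc, hb0, hb⟩ := TopologicalSpace.exists_countable_basis ℝ
  have hbne : b.Nonempty := by
    obtain ⟨v, hv, -⟩ := hb.exists_subset_of_mem_open (mem_univ (0 : ℝ)) isOpen_univ
    exact ⟨v, hv⟩
  obtain ⟨U, rfl⟩ := hbc.exists_eq_range hbne
  have hUne : ∀ n, (U n).Nonempty := fun n =>
    nonempty_iff_ne_empty.2 fun h => hb0 (h ▸ mem_range_self n)
  obtain ⟨P, hPb, hPU, hPd⟩ := exists_disjoint_big hsub hcnt U fun n =>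
    huniv.of_isOpen hsub hcnt hinv (hb.isOpen (mem_range_self n)) (hUne n)
  choose hPm G hG hGfib using hPb
  obtain ⟨g, hg, hgG⟩ := exists_measurable_piecewise P hPm G hG (fun i j hij y hy => by
    rcases lt_or_gt_of_ne hij with h | h
    · exact (Set.disjoint_left.1 (hPd _ _ h) hy.1 hy.2).elim
    · exact (Set.disjoint_left.1 (hPd _ _ h) hy.2 hy.1).elim)
  refine ⟨g, hg, fun x V hV ⟨z, hz⟩ hmem => ?_⟩
  obtain ⟨_, ⟨n, rfl⟩, -, hn⟩ := hb.exists_subset_of_mem_open hz hV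
  refine hGfib n x (hsub _ _ ?_ hmem)
  rintro y ⟨hyP, hy⟩
  exact ⟨(hgG n hyP).trans hy, hn (hPU n hyP)⟩
end

section
/- The ideal I has property (M') if and only if there exists a Borel measurable function f : X → X such that for every n ∈ ℕ the set H_n(f) contains a nonempty perfect subset of X. -/
/-!
Call `E` *`I`-rich* if some Borel map `g : X → X` has all the sets `E ∩ g ⁻¹' {y}` outside `I`;
for Borel `E` this is property (M) relative to `E`.

For the forward direction, the key point is that the family of non-rich sets is closed under
finite unions (`IRich.of_union`), although the sets `{y | C ∩ g ⁻¹' {y} ∉ I}` need not be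
measurable. Identify `X` with `X × X`, so that `C ∪ D` is rich through `g = (g₁, g₂)`: either every
vertical section of `X × X` contains a point whose fibre is positive on `C`, and then `g₁` works for
`C`, or on some vertical section all fibres are positive on `D`, and then `g₂` works for `D`.

Through the same identification, a rich set `E` splits into the uncountably many disjoint rich
pieces `B_x = E ∩ g₁ ⁻¹' {x}`. For any rich `F`, at most one `x` makes `F \ B_x` non-rich, as
`F = (F \ B_x) ∪ (F \ B_y)` for `x ≠ y`. So, given countably many rich sets, some `B_x` leaves all
of them rich after its removal (`exists_rich_piece`), and iterating gives disjoint Borel rich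
`B n ⊆ U n` (`exists_disjoint_rich`). Gluing the witnesses on the `B n` gives a Borel `f` with
`H_n(f) = X` for all `n`, and `X` contains a perfect set because it is uncountable.

Conversely, a nonempty perfect set `P ⊆ H_n(f)` is an uncountable standard Borel space, hence Borel
isomorphic to `X`, and composing `f` with the isomorphism witnesses (M) relative to any `V ⊇ U n`.
-/

open Set MeasureTheory

/-- `I` has property (M) relative to `E ⊆ X`: there is a Borel measurable function
`f : E → X` all of whose fibers (as subsets of `X`) are outside `I`. -/
def MRel {X : Type*} [TopologicalSpace X] [MeasurableSpace X]
    (I : Set (Set X)) (E : Set X) : Prop :=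
  ∃ f : ↥E → X, Measurable f ∧ ∀ x : X, (Subtype.val '' (f ⁻¹' {x})) ∉ I

/-- `I` has property (M'_x): it has property (M) relative to every open
neighborhood of `x`. -/
def MPrimeAt {X : Type*} [TopologicalSpace X] [MeasurableSpace X]
    (I : Set (Set X)) (x : X) : Prop :=
  ∀ U : Set X, IsOpen U → x ∈ U → MRel I U

/-- `H_n(f) = {y ∈ X : U n ∩ f⁻¹[{y}] ∉ I}`. -/
def Hset {X : Type*} (I : Set (Set X)) (U : ℕ → Set X) (f : X → X) (n : ℕ) : Set X :=
  {y | U n ∩ f ⁻¹' {y} ∉ I}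

section Rich

variable {X : Type*} [TopologicalSpace X] [PolishSpace X] [MeasurableSpace X] [BorelSpace X]
  [Uncountable X] {I : Set (Set X)}

/-- Property (M) relative to `E`, with the witness defined on the whole space instead of on the
subtype `E`. For measurable `E` it is equivalent to `MRel I E`. -/
def IRich (I : Set (Set X)) (E : Set X) : Prop :=
  ∃ g : X → X, Measurable g ∧ ∀ y, E ∩ g ⁻¹' {y} ∉ I

/-- The plane as a Borel copy of `X`. -/
noncomputable def planeEquiv (X : Type*) [TopologicalSpace X] [PolishSpace X] [MeasurableSpace X]
    [BorelSpace X] [Uncountable X] : X ≃ᵐ X × X :=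
  PolishSpace.measurableEquivOfNotCountable (not_countable_iff.2 inferInstance)
    (not_countable_iff.2 inferInstance)

/-- The target of a witness of richness may be taken to be the plane. -/
theorem IRich.exists_pair {E : Set X} (h : IRich I E) :
    ∃ g₁ g₂ : X → X, Measurable g₁ ∧ Measurable g₂ ∧
      ∀ a b, E ∩ (g₁ ⁻¹' {a} ∩ g₂ ⁻¹' {b}) ∉ I := by
  obtain ⟨g, hg, hI⟩ := h
  refine ⟨fun x => (planeEquiv X (g x)).1, fun x => (planeEquiv X (g x)).2,
    measurable_fst.comp ((planeEquiv X).measurable.comp hg),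
    measurable_snd.comp ((planeEquiv X).measurable.comp hg), fun a b => ?_⟩
  convert hI ((planeEquiv X).symm (a, b)) using 3
  ext x
  simp only [mem_inter_iff, mem_preimage, mem_singleton_iff]
  rw [← Prod.ext_iff (y := (a, b))]
  exact (planeEquiv X).toEquiv.eq_symm_apply.symm

theorem IRich.of_union (hsub : ∀ A B : Set X, A ⊆ B → B ∈ I → A ∈ I)
    (hun : ∀ A B : Set X, A ∈ I → B ∈ I → A ∪ B ∈ I) {C D : Set X}
    (h : IRich I (C ∪ D)) : IRich I C ∨ IRich I D := by
  obtain ⟨g₁, g₂, h₁, h₂, hI⟩ := h.exists_pair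
  by_cases hC : ∀ a, ∃ b, C ∩ (g₁ ⁻¹' {a} ∩ g₂ ⁻¹' {b}) ∉ I
  · refine Or.inl ⟨g₁, h₁, fun a ha => ?_⟩
    obtain ⟨b, hb⟩ := hC a
    exact hb (hsub _ _ (inter_subset_inter_right _ inter_subset_left) ha)
  · push Not at hC
    obtain ⟨a, ha⟩ := hC
    refine Or.inr ⟨g₂, h₂, fun b hb => hI a b ?_⟩
    rw [union_inter_distrib_right]
    exact hun _ _ (ha b) (hsub _ _ (inter_subset_inter_right _ inter_subset_right) hb)

theorem exists_rich_piece (hsub : ∀ A B : Set X, A ⊆ B → B ∈ I → A ∈ I)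
    (hun : ∀ A B : Set X, A ∈ I → B ∈ I → A ∪ B ∈ I) (E : ℕ → Set X)
    (hE : ∀ k, MeasurableSet (E k) ∧ IRich I (E k)) :
    ∃ B ⊆ E 0, (MeasurableSet B ∧ IRich I B) ∧
      ∀ k, MeasurableSet (E k \ B) ∧ IRich I (E k \ B) := by
  obtain ⟨g₁, g₂, h₁, h₂, hI⟩ := (hE 0).2.exists_pair
  have hbad : (⋃ k, {x | ¬ IRich I (E k \ (E 0 ∩ g₁ ⁻¹' {x}))}).Countable := by
    refine countable_iUnion fun k => Set.Subsingleton.countable fun x hx y hy => ?_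
    by_contra hne
    have hunion : (E k \ (E 0 ∩ g₁ ⁻¹' {x})) ∪ (E k \ (E 0 ∩ g₁ ⁻¹' {y})) = E k := by
      ext z
      simp only [mem_union, mem_sdiff, mem_inter_iff, mem_preimage, mem_singleton_iff]
      grind
    rcases IRich.of_union hsub hun (hunion.symm ▸ (hE k).2) with h | h
    exacts [hx h, hy h]
  obtain ⟨x, hx⟩ : ∃ x, x ∉ ⋃ k, {x | ¬ IRich I (E k \ (E 0 ∩ g₁ ⁻¹' {x}))} := by
    by_contra! hall
    exact not_countable_univ (hbad.mono fun x _ => hall x)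
  simp only [mem_iUnion, mem_ofPred_eq, not_exists, not_not] at hx
  have hB : MeasurableSet (E 0 ∩ g₁ ⁻¹' {x}) := (hE 0).1.inter (h₁ (measurableSet_singleton x))
  refine ⟨_, inter_subset_left, ⟨hB, g₂, h₂, fun b => ?_⟩, fun k => ⟨(hE k).1.diff hB, hx k⟩⟩
  rw [inter_assoc]
  exact hI x b

theorem exists_disjoint_rich (hsub : ∀ A B : Set X, A ⊆ B → B ∈ I → A ∈ I)
    (hun : ∀ A B : Set X, A ∈ I → B ∈ I → A ∪ B ∈ I) (U : ℕ → Set X)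
    (hU : ∀ k, MeasurableSet (U k) ∧ IRich I (U k)) :
    ∃ B : ℕ → Set X, (∀ n, B n ⊆ U n) ∧ (∀ n, MeasurableSet (B n) ∧ IRich I (B n)) ∧
      Pairwise (Function.onFun Disjoint B) := by
  choose! p hp0 hp hpd using exists_rich_piece hsub hun
  -- `S n k` is what is left of `U (n + k)` once the first `n` pieces are removed.
  let S : ℕ → ℕ → Set X := fun n => Nat.rec U (fun _ E k => E (k + 1) \ p E) n
  have hS1 : ∀ n k, S (n + 1) k = S n (k + 1) \ p (S n) := fun _ _ => rfl
  have hS : ∀ n k, MeasurableSet (S n k) ∧ IRich I (S n k) := by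
    intro n
    induction n with
    | zero => exact hU
    | succ n ih => exact fun k => hpd _ ih (k + 1)
  have hSU : ∀ n k, S n k ⊆ U (n + k) := by
    intro n
    induction n with
    | zero => intro k; rw [zero_add]; exact subset_rfl
    | succ n ih =>
      intro k
      rw [hS1, show n + 1 + k = n + (k + 1) by omega]
      exact sdiff_subset.trans (ih _)
  have hdis : ∀ m d k, Disjoint (p (S m)) (S (m + 1 + d) k) := by
    intro m d
    induction d with
    | zero => exact fun k => disjoint_sdiff_right
    | succ d ih => exact fun k => (ih (k + 1)).mono_right sdiff_subset
  have hlt : ∀ m n, m < n → Disjoint (p (S m)) (p (S n)) := by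
    intro m n hmn
    obtain ⟨d, rfl⟩ := Nat.exists_eq_add_of_le hmn
    exact (hdis m d 0).mono_right (hp0 _ (hS _))
  refine ⟨fun n => p (S n), fun n => (hp0 _ (hS n)).trans (hSU n 0), fun n => hp _ (hS n), ?_⟩
  intro m n hmn
  rcases lt_or_gt_of_ne hmn with h | h
  exacts [hlt m n h, (hlt n m h).symm]

theorem MRel.iRich {E : Set X} (hE : MeasurableSet E) (h : MRel I E) : IRich I E := by
  obtain ⟨f, hf, hI⟩ := h
  obtain ⟨g, hg, hgf⟩ := (MeasurableEmbedding.subtype_coe hE).exists_measurable_extend hf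
    (fun _ => inferInstance)
  refine ⟨g, hg, fun y => ?_⟩
  convert hI y using 1
  rw [← hgf, preimage_comp, Subtype.image_preimage_coe]

theorem Perfect.not_countable_coe {P : Set X} (hP : Perfect P) (hne : P.Nonempty) :
    ¬ Countable P := by
  let _ := TopologicalSpace.upgradeIsCompletelyMetrizable X
  obtain ⟨f, hfP, -, hf⟩ := hP.exists_nat_bool_injection hne
  intro hc
  -- A countable `P` would make the Cantor space countable.
  have hc' : Countable (ℕ → Bool) :=
    (hf.codRestrict (s := P) (fun x => hfP (mem_range_self x))).countable
  rw [← Cardinal.mk_le_aleph0_iff] at hc'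
  simp only [Cardinal.mk_pi, Cardinal.mk_bool, Cardinal.prod_const, Cardinal.lift_id,
    Cardinal.mk_nat] at hc'
  exact (Cardinal.cantor Cardinal.aleph0).not_ge (by simpa using hc')

end Rich

/-- Let `X` be an uncountable Polish space, `I` an ideal on `X` containing no nonempty
open set, and `{U n}` a countable base of nonempty open sets.  Then `I` has property
(M') — property (M) relative to every nonempty open set — iff there is a Borel function
`f : X → X` such that every set `H_n(f)` contains a nonempty perfect set. -/
theorem stmt17 {X : Type*} [TopologicalSpace X] [PolishSpace X]
    [MeasurableSpace X] [BorelSpace X] [Uncountable X]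
    (I : Set (Set X))
    (hsub : ∀ A B : Set X, A ⊆ B → B ∈ I → A ∈ I)
    (hun : ∀ A B : Set X, A ∈ I → B ∈ I → A ∪ B ∈ I)
    (hopen : ∀ V : Set X, IsOpen V → V.Nonempty → V ∉ I)
    (U : ℕ → Set X) (hbasis : TopologicalSpace.IsTopologicalBasis (Set.range U))
    (hUne : ∀ n, (U n).Nonempty) :
    (∀ V : Set X, IsOpen V → V.Nonempty → MRel I V) ↔
      ∃ f : X → X, Measurable f ∧
        ∀ n : ℕ, ∃ P : Set X, P ⊆ Hset I U f n ∧ Perfect P ∧ P.Nonempty := by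
  constructor
  · intro h
    have hUo : ∀ n, IsOpen (U n) := fun n => hbasis.isOpen (mem_range_self n)
    obtain ⟨B, hBU, hB, hdis⟩ := exists_disjoint_rich hsub hun U fun n =>
      ⟨(hUo n).measurableSet, (h _ (hUo n) (hUne n)).iRich (hUo n).measurableSet⟩
    choose g hg hI using fun n => (hB n).2
    obtain ⟨f, hf, hfg⟩ := exists_measurable_piecewise B (fun n => (hB n).1) g hg
      (fun m n hmn x hx => (disjoint_left.1 (hdis hmn) hx.1 hx.2).elim)
    obtain ⟨P, hP, hne, -⟩ := exists_perfect_nonempty_of_isClosed_of_not_countable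
      (isClosed_univ (X := X)) not_countable_univ
    refine ⟨f, hf, fun n => ⟨P, fun y _ hy => hI n y (hsub _ _ ?_ hy), hP, hne⟩⟩
    rintro x ⟨hxB, hxy⟩
    exact ⟨hBU n hxB, (hfg n hxB).trans hxy⟩
  · rintro ⟨f, hf, hH⟩ V hV ⟨x, hx⟩
    obtain ⟨_, ⟨n, rfl⟩, -, hnV⟩ := hbasis.exists_subset_of_mem_open hx hV
    obtain ⟨P, hPH, hP, hne⟩ := hH n
    have := hP.closed.measurableSet.standardBorel
    let e : P ≃ᵐ X := PolishSpace.measurableEquivOfNotCountable (hP.not_countable_coe hne)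
      (not_countable_iff.2 inferInstance)
    obtain ⟨φ, hφ, hφe⟩ := (MeasurableEmbedding.subtype_coe
      hP.closed.measurableSet).exists_measurable_extend e.measurable (fun _ => ⟨x⟩)
    refine ⟨fun v => φ (f v), hφ.comp (hf.comp measurable_subtype_coe), fun y hy => ?_⟩
    refine hPH (e.symm y).2 (hsub _ _ ?_ hy)
    rintro z ⟨hzU, hz⟩
    refine ⟨⟨z, hnV hzU⟩, ?_, rfl⟩
    have hz' : f z = e.symm y := hz
    have := congrFun hφe (e.symm y)
    simp only [Function.comp_apply, MeasurableEquiv.apply_symm_apply] at this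
    simp [hz', this]
end
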